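/- For every p, q ∈ [1,∞), every Banach space (X,‖·‖_X), and every smooth compactly supported f : ℍ(ℝ) → X, (∫₀^∞ (∫_{ℍ(ℝ)} ‖P_t * f(hc^t) − P_t * f(h)‖_X^p dμ(h))^{q/p} dt/t^{1+q/2})^{1/q} ≤ (8√2/π) (∫₀^∞ t^{q/2−1} ‖Q_t * f‖_{L_p(ℍ(ℝ),X)}^q dt)^{1/q}. -/

import Mathlib

open MeasureTheory

/-- The real Heisenberg group `ℍ(ℝ)`, identified with `ℝ³`; the Lebesgue measure
(`volume`) is a Haar measure for the Heisenberg group structure. -/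
abbrev HR : Type := ℝ × ℝ × ℝ

namespace HR

/-- Right translation by the central element `c^t`: `h ↦ h·c^t`. -/
def vmul (t : ℝ) (h : HR) : HR := (h.1, h.2.1, h.2.2 + t)

/-- The Poisson kernel `P_t(u) = t/(π(t²+u²))` on `ℝ`. -/
noncomputable def Pker (t u : ℝ) : ℝ := t / (Real.pi * (t ^ 2 + u ^ 2))

/-- `Q_t(u) = ∂P_t/∂t(u) = (u²−t²)/(π(t²+u²)²)`. -/
noncomputable def Qker (t u : ℝ) : ℝ := (u ^ 2 - t ^ 2) / (Real.pi * (t ^ 2 + u ^ 2) ^ 2)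

variable {X : Type*} [NormedAddCommGroup X] [NormedSpace ℝ X]

/-- Convolution of a kernel `ψ : ℝ → ℝ` with `g : ℍ(ℝ) → X` along the center:
`(ψ*g)(x,y,z) = ∫_ℝ ψ(u) g(x,y,z−u) du`. -/
noncomputable def conv (ψ : ℝ → ℝ) (g : HR → X) (h : HR) : X :=
  ∫ u : ℝ, ψ u • g (h.1, h.2.1, h.2.2 - u)

/-- The left-invariant horizontal derivative `∂_a f = ∂f/∂x`. -/
noncomputable def da (f : HR → X) (h : HR) : X := fderiv ℝ f h (1, 0, 0)

/-- The left-invariant horizontal derivative `∂_b f = ∂f/∂y + x·∂f/∂z`. -/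
noncomputable def db (f : HR → X) (h : HR) : X :=
  fderiv ℝ f h (0, 1, 0) + h.1 • fderiv ℝ f h (0, 0, 1)

end HR

/-!
The semigroup identity `Q_{2r} = P_r * Q_r` and `∂P_s/∂s = Q_s` write the increment of `P_t * f`
along `c^a` as an integral, over `r > t / 2`, of `Q_r * f` convolved with the increment of `P_r`.
That increment has `L₁` norm at most `2|a|/(πr)`, so Minkowski's integral inequality bounds the
`L_p` norm of the increment of `P_t * f` by `∫_{r > t/2} 4|a|/(πr) ‖Q_r * f‖_p dr`. For `a = t` the
substitution `r = st` turns this into `t ∫_{s > 1/2} 4/(πs) ‖Q_{st} * f‖_p ds`, an average over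
dilations, and Hardy's inequality (Minkowski's inequality in `L_q` of the weighted half-line) gives
the constant `(4/π) ∫_{s > 1/2} s^{-3/2} ds = 8√2/π`.
-/

open Set Filter Topology
open scoped ENNReal Real

section Minkowski

variable {α β : Type*} [MeasurableSpace α] [MeasurableSpace β] {μ : Measure α} {ν : Measure β}

theorem lintegral_rpow_le_measure_univ_mul {p : ℝ} (hp : 1 ≤ p) {g : α → ℝ≥0∞}
    (hg : AEMeasurable g μ) :
    (∫⁻ x, g x ∂μ) ^ p ≤ μ univ ^ (p - 1) * ∫⁻ x, g x ^ p ∂μ := by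
  have hp0 : 0 < p := zero_lt_one.trans_le hp
  have h := eLpNorm'_le_eLpNorm'_mul_rpow_measure_univ one_pos hp hg.aestronglyMeasurable
  simp only [eLpNorm', enorm_eq_self, ENNReal.rpow_one, div_one] at h
  calc (∫⁻ x, g x ∂μ) ^ p
      ≤ ((∫⁻ x, g x ^ p ∂μ) ^ (1 / p) * μ univ ^ (1 - 1 / p)) ^ p := by gcongr
    _ = μ univ ^ (p - 1) * ∫⁻ x, g x ^ p ∂μ := by
        rw [ENNReal.mul_rpow_of_nonneg _ _ hp0.le, ← ENNReal.rpow_mul, ← ENNReal.rpow_mul,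
          one_div_mul_cancel hp0.ne', ENNReal.rpow_one, sub_mul, one_mul,
          one_div_mul_cancel hp0.ne', mul_comm]

theorem lintegral_mul_rpow_le_lintegral_rpow_mul {p : ℝ} (hp : 1 ≤ p) {g w : α → ℝ≥0∞}
    (hg : Measurable g) (hw : Measurable w) :
    (∫⁻ x, g x * w x ∂μ) ^ p ≤ (∫⁻ x, w x ∂μ) ^ (p - 1) * ∫⁻ x, g x ^ p * w x ∂μ := by
  have h := lintegral_rpow_le_measure_univ_mul (μ := μ.withDensity w) hp hg.aemeasurable
  rw [lintegral_withDensity_eq_lintegral_mul _ hw hg,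
    lintegral_withDensity_eq_lintegral_mul _ hw (hg.pow_const p),
    withDensity_apply _ .univ, Measure.restrict_univ] at h
  simpa only [Pi.mul_apply, mul_comm (w _)] using h

theorem ae_ae_eq_div_mul_of_lintegral_rpow_ne_top [SFinite μ] [SFinite ν] {p : ℝ} (hp : 0 < p)
    {F : α → β → ℝ≥0∞} (hF : Measurable (Function.uncurry F)) {N : β → ℝ≥0∞} (hN : Measurable N)
    (hNF : ∀ y, N y ^ p = ∫⁻ x, F x y ^ p ∂μ) (hN' : ∀ᵐ y ∂ν, N y ≠ ∞) :
    ∀ᵐ x ∂μ, ∀ᵐ y ∂ν, F x y = F x y / N y * N y := by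
  have hmeas : MeasurableSet {z : α × β | F z.1 z.2 = F z.1 z.2 / N z.2 * N z.2} :=
    measurableSet_eq_fun hF
      ((hF.div (hN.comp measurable_snd)).mul (hN.comp measurable_snd))
  rw [Measure.ae_ae_comm hmeas]
  filter_upwards [hN'] with y hy
  rcases eq_or_ne (N y) 0 with h0 | h0
  · have hzero : ∫⁻ x, F x y ^ p ∂μ = 0 := by rw [← hNF, h0, ENNReal.zero_rpow_of_pos hp]
    have hFy : Measurable (F · y) := hF.comp measurable_prodMk_right
    filter_upwards [(lintegral_eq_zero_iff (hFy.pow_const p)).1 hzero] with x hx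
    rw [h0, mul_zero]
    exact (ENNReal.rpow_eq_zero_iff_of_pos hp).1 hx
  · exact ae_of_all _ fun x ↦ (ENNReal.div_mul_cancel h0 hy).symm

theorem lintegral_lintegral_rpow_rpow_inv_le [SFinite μ] [SFinite ν] {p : ℝ} (hp : 1 ≤ p)
    {F : α → β → ℝ≥0∞} (hF : Measurable (Function.uncurry F)) :
    (∫⁻ x, (∫⁻ y, F x y ∂ν) ^ p ∂μ) ^ (1 / p) ≤ ∫⁻ y, (∫⁻ x, F x y ^ p ∂μ) ^ (1 / p) ∂ν := by
  have hp0 : 0 < p := zero_lt_one.trans_le hp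
  let N : β → ℝ≥0∞ := fun y ↦ (∫⁻ x, F x y ^ p ∂μ) ^ (1 / p)
  have hNp (y : β) : N y ^ p = ∫⁻ x, F x y ^ p ∂μ := by
    rw [← ENNReal.rpow_mul, one_div_mul_cancel hp0.ne', ENNReal.rpow_one]
  have hN : Measurable N := (hF.pow_const p).lintegral_prod_left'.pow_const (1 / p)
  rcases eq_or_ne (∫⁻ y, N y ∂ν) ∞ with hS | hS
  · exact hS ▸ le_top
  have hfactor := ae_ae_eq_div_mul_of_lintegral_rpow_ne_top hp0 hF hN hNp
    ((ae_lt_top hN hS).mono fun _ ↦ LT.lt.ne)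
  have hm : Measurable (Function.uncurry fun x y ↦ (F x y / N y) ^ p * N y) :=
    ((hF.div (hN.comp measurable_snd)).pow_const p).mul (hN.comp measurable_snd)
  have hslice (y : β) : ∫⁻ x, (F x y / N y) ^ p * N y ∂μ ≤ N y := by
    simp_rw [div_eq_mul_inv, ENNReal.mul_rpow_of_nonneg _ _ hp0.le]
    have hFy : Measurable fun x ↦ F x y ^ p := (hF.comp measurable_prodMk_right).pow_const p
    rw [lintegral_mul_const _ (hFy.mul_const _), lintegral_mul_const _ hFy, ← hNp,
      ← ENNReal.mul_rpow_of_nonneg _ _ hp0.le]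
    exact mul_le_of_le_one_left' (ENNReal.rpow_le_one (ENNReal.mul_inv_le_one _) hp0.le)
  rw [one_div p, ENNReal.rpow_inv_le_iff hp0, ← one_div p]
  calc ∫⁻ x, (∫⁻ y, F x y ∂ν) ^ p ∂μ
      ≤ ∫⁻ x, (∫⁻ y, N y ∂ν) ^ (p - 1) * ∫⁻ y, (F x y / N y) ^ p * N y ∂ν ∂μ := by
        refine lintegral_mono_ae (hfactor.mono fun x hx ↦ ?_)
        rw [lintegral_congr_ae hx]
        exact lintegral_mul_rpow_le_lintegral_rpow_mul hp
          ((hF.comp measurable_prodMk_left).div hN) hN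
    _ = (∫⁻ y, N y ∂ν) ^ (p - 1) * ∫⁻ y, ∫⁻ x, (F x y / N y) ^ p * N y ∂μ ∂ν := by
        rw [← lintegral_lintegral_swap hm.aemeasurable]
        exact lintegral_const_mul _ hm.lintegral_prod_right'
    _ ≤ (∫⁻ y, N y ∂ν) ^ (p - 1) * (∫⁻ y, N y ∂ν) ^ (1 : ℝ) := by
        rw [ENNReal.rpow_one]
        exact mul_le_mul_right (lintegral_mono hslice) _
    _ = (∫⁻ y, N y ∂ν) ^ p := by
        rw [← ENNReal.rpow_add_of_nonneg _ _ (sub_nonneg.2 hp) zero_le_one, sub_add_cancel]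

theorem eLpNorm_lintegral_le [SFinite μ] [SFinite ν] {p : ℝ≥0∞} (hp : 1 ≤ p) (hp' : p ≠ ∞)
    {F : α → β → ℝ≥0∞} (hF : Measurable (Function.uncurry F)) :
    eLpNorm (fun x ↦ ∫⁻ y, F x y ∂ν) p μ ≤ ∫⁻ y, eLpNorm (F · y) p μ ∂ν := by
  have hp0 : p ≠ 0 := (zero_lt_one.trans_le hp).ne'
  simp only [eLpNorm_eq_lintegral_rpow_enorm_toReal hp0 hp', enorm_eq_self]
  exact lintegral_lintegral_rpow_rpow_inv_le
    (by simpa using ENNReal.toReal_mono hp' hp) hF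

end Minkowski

section Hardy

theorem setLIntegral_Ioi_comp_mul_left (g : ℝ → ℝ≥0∞) {c : ℝ} (hc : 0 < c) (a : ℝ) :
    ∫⁻ x in Ioi (c * a), g x = ENNReal.ofReal c * ∫⁻ x in Ioi a, g (c * x) := by
  rw [← image_mul_left_Ioi hc, lintegral_image_eq_lintegral_abs_deriv_mul measurableSet_Ioi
    (fun x _ ↦ ((hasDerivAt_id' x).const_mul c).hasDerivWithinAt)
    (mul_right_injective₀ hc.ne').injOn]
  simp only [mul_one, abs_of_pos hc]
  exact lintegral_const_mul' _ _ ENNReal.ofReal_ne_top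

theorem setLIntegral_Ioi_zero_rpow_mul_comp_mul_left (g : ℝ → ℝ≥0∞) {c : ℝ} (hc : 0 < c) (a : ℝ) :
    ∫⁻ t in Ioi 0, ENNReal.ofReal (t ^ (a - 1)) * g (c * t) =
      ENNReal.ofReal (c ^ (-a)) * ∫⁻ t in Ioi 0, ENNReal.ofReal (t ^ (a - 1)) * g t := by
  have h := setLIntegral_Ioi_comp_mul_left
    (fun t ↦ ENNReal.ofReal (t ^ (a - 1)) * g t) hc 0
  rw [mul_zero] at h
  rw [h, ← mul_assoc, ← ENNReal.ofReal_mul (by positivity), ← Real.rpow_add_one hc.ne',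
    ← lintegral_const_mul' _ _ ENNReal.ofReal_ne_top]
  refine setLIntegral_congr_fun measurableSet_Ioi fun t (ht : 0 < t) ↦ ?_
  rw [← mul_assoc, ← ENNReal.ofReal_mul (by positivity), Real.mul_rpow hc.le ht.le, ← mul_assoc,
    ← Real.rpow_add hc, show -a + 1 + (a - 1) = 0 by ring, Real.rpow_zero, one_mul]

theorem lintegral_rpow_mul_lintegral_comp_mul_rpow_le {q : ℝ} (hq : 1 ≤ q) (a : ℝ)
    {ν : Measure ℝ} [SFinite ν] (hν : ∀ᵐ s ∂ν, 0 < s) {G : ℝ → ℝ≥0∞} (hG : Measurable G) :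
    (∫⁻ t in Ioi 0, ENNReal.ofReal (t ^ (a * q - 1)) * (∫⁻ s, G (s * t) ∂ν) ^ q) ^ (1 / q) ≤
      (∫⁻ s, ENNReal.ofReal (s ^ (-a)) ∂ν) *
        (∫⁻ t in Ioi 0, ENNReal.ofReal (t ^ (a * q - 1)) * G t ^ q) ^ (1 / q) := by
  have hq0 : 0 < q := zero_lt_one.trans_le hq
  have hw : Measurable fun t : ℝ ↦ ENNReal.ofReal (t ^ (a * q - 1)) := by fun_prop
  have hF : Measurable (Function.uncurry fun t s : ℝ ↦ G (s * t)) :=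
    hG.comp (measurable_snd.mul measurable_fst)
  have hGpow (s : ℝ) : Measurable fun t ↦ G (s * t) ^ q :=
    (hG.comp (measurable_const_mul s)).pow_const q
  have hMinkowski := lintegral_lintegral_rpow_rpow_inv_le (ν := ν)
    (μ := (volume.restrict (Ioi 0)).withDensity fun t ↦ ENNReal.ofReal (t ^ (a * q - 1))) hq hF
  have hinnerpow : Measurable fun t ↦ (∫⁻ s, G (s * t) ∂ν) ^ q :=
    hF.lintegral_prod_right'.pow_const q
  rw [lintegral_withDensity_eq_lintegral_mul _ hw hinnerpow] at hMinkowski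
  refine hMinkowski.trans_eq ?_
  rw [← lintegral_mul_const _ (by fun_prop)]
  refine lintegral_congr_ae (hν.mono fun s hs ↦ ?_)
  dsimp only
  rw [lintegral_withDensity_eq_lintegral_mul _ hw (hGpow s)]
  simp only [Pi.mul_apply]
  rw [setLIntegral_Ioi_zero_rpow_mul_comp_mul_left (fun t ↦ G t ^ q) hs,
    ENNReal.mul_rpow_of_nonneg _ _ (one_div_nonneg.2 hq0.le),
    ENNReal.ofReal_rpow_of_pos (by positivity), ← Real.rpow_mul hs.le]
  field_simp

end Hardy

section Translation

theorem lintegral_enorm_comp_add_right_sub_le {X : Type*} [NormedAddCommGroup X]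
    [NormedSpace ℝ X] [CompleteSpace X] {g g' : ℝ → X} (hg : ∀ x, HasDerivAt g (g' x) x)
    (hg' : Integrable g') (a : ℝ) :
    ∫⁻ v, ‖g (v + a) - g v‖ₑ ≤ ENNReal.ofReal |a| * ∫⁻ v, ‖g' v‖ₑ := by
  have hFTC (v : ℝ) : ‖g (v + a) - g v‖ₑ ≤ ∫⁻ w in uIoc 0 a, ‖g' (v + w)‖ₑ := by
    have h := intervalIntegral.integral_eq_sub_of_hasDerivAt (a := 0) (b := a)
      (fun w _ ↦ (hg (v + w)).comp_const_add v w) (hg'.comp_add_left v).intervalIntegrable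
    rw [add_zero] at h
    rw [← h, ← ofReal_norm, intervalIntegral.norm_intervalIntegral_eq,
      ofReal_norm]
    exact enorm_integral_le_lintegral_enorm _
  calc ∫⁻ v, ‖g (v + a) - g v‖ₑ
      ≤ ∫⁻ v, ∫⁻ w in uIoc 0 a, ‖g' (v + w)‖ₑ := lintegral_mono hFTC
    _ = ∫⁻ w in uIoc 0 a, ∫⁻ v, ‖g' (v + w)‖ₑ := by
        have hadd : AEStronglyMeasurable (fun x : ℝ × ℝ ↦ g' (x.1 + x.2)) :=
          hg'.1.comp_quasiMeasurePreserving (quasiMeasurePreserving_add volume volume)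
        exact lintegral_lintegral_swap (hadd.mono_ac
          (.prod .rfl Measure.restrict_le_self.absolutelyContinuous)).enorm
    _ = ENNReal.ofReal |a| * ∫⁻ v, ‖g' v‖ₑ := by
        simp [lintegral_add_right_eq_self (fun v ↦ ‖g' v‖ₑ), mul_comm, Real.volume_uIoc]

end Translation

section Lp

variable {α E : Type*} [MeasurableSpace α] {μ : Measure α} [NormedAddCommGroup E] {p : ℝ≥0∞}

theorem ae_lt_top_of_eLpNorm_lt_top (hp : p ≠ 0) (hp' : p ≠ ∞) {g : α → ℝ≥0∞} (hg : Measurable g)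
    (h : eLpNorm g p μ < ∞) : ∀ᵐ x ∂μ, g x < ∞ := by
  rw [eLpNorm_lt_top_iff_lintegral_rpow_enorm_lt_top hp hp'] at h
  filter_upwards [ae_lt_top (hg.pow_const _) h.ne] with x hx
  exact (ENNReal.rpow_lt_top_iff_of_pos (ENNReal.toReal_pos hp hp')).1 hx

theorem measurable_eLpNorm_prod_left {β : Type*} [MeasurableSpace β] [SFinite μ] (hp : p ≠ 0)
    (hp' : p ≠ ∞) {F : β → α → E} (hF : StronglyMeasurable (Function.uncurry F)) :
    Measurable fun x ↦ eLpNorm (F x) p μ := by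
  simp_rw [eLpNorm_eq_lintegral_rpow_enorm_toReal hp hp']
  exact (hF.enorm.pow_const _).lintegral_prod_right'.pow_const _

theorem ofReal_mul_integral_norm_rpow_rpow {p q c : ℝ} (hp : 0 < p) (hq : 0 ≤ q) (hc : 0 ≤ c)
    {g : α → E} (hg : MemLp g (ENNReal.ofReal p) μ) :
    ENNReal.ofReal (c * ((∫ x, ‖g x‖ ^ p ∂μ) ^ (1 / p)) ^ q) =
      ENNReal.ofReal c * eLpNorm g (ENNReal.ofReal p) μ ^ q := by
  rw [← ofReal_lpNorm hg, lpNorm_eq_integral_norm_rpow_toReal (by simpa) ENNReal.ofReal_ne_top hg.1,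
    ENNReal.toReal_ofReal hp.le, one_div, ENNReal.ofReal_mul hc,
    ENNReal.ofReal_rpow_of_nonneg (by positivity) hq]

end Lp

namespace HR

section PoissonKernel

theorem Pker_nonneg {t : ℝ} (ht : 0 ≤ t) (u : ℝ) : 0 ≤ Pker t u := by
  unfold Pker; positivity

theorem Pker_neg_right (t u : ℝ) : Pker t (-u) = Pker t u := by
  simp only [Pker, even_two.neg_pow]

theorem Pker_div_self {t : ℝ} (ht : 0 < t) (u : ℝ) :
    Pker t u / t = (π * (t ^ 2 + u ^ 2))⁻¹ := by
  unfold Pker; field_simp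

theorem Pker_div_self_le {t : ℝ} (ht : 0 < t) (u : ℝ) : Pker t u / t ≤ (π * t ^ 2)⁻¹ := by
  rw [Pker_div_self ht]
  gcongr
  exact le_add_of_nonneg_right (sq_nonneg u)

theorem Pker_le {t : ℝ} (ht : 0 < t) (u : ℝ) : Pker t u ≤ (π * t)⁻¹ := by
  have h := (div_le_iff₀ ht).1 (Pker_div_self_le ht u)
  rwa [pow_two, ← mul_assoc, mul_inv, mul_assoc, inv_mul_cancel₀ ht.ne', mul_one] at h

theorem abs_div_pi_mul_sq_le_Pker_div_self {t : ℝ} (ht : 0 < t) {n u : ℝ}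
    (hn : |n| ≤ t ^ 2 + u ^ 2) : |n / (π * (t ^ 2 + u ^ 2) ^ 2)| ≤ Pker t u / t := by
  calc |n / (π * (t ^ 2 + u ^ 2) ^ 2)|
      = |n| / (π * (t ^ 2 + u ^ 2) ^ 2) := by
        rw [abs_div, abs_of_nonneg (by positivity : 0 ≤ π * (t ^ 2 + u ^ 2) ^ 2)]
    _ ≤ (t ^ 2 + u ^ 2) / (π * (t ^ 2 + u ^ 2) ^ 2) := by gcongr
    _ = Pker t u / t := by rw [Pker_div_self ht]; field_simp

theorem abs_Qker_le {t : ℝ} (ht : 0 < t) (u : ℝ) : |Qker t u| ≤ Pker t u / t := by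
  refine abs_div_pi_mul_sq_le_Pker_div_self ht (abs_le.2 ⟨?_, ?_⟩) <;>
    linarith [sq_nonneg t, sq_nonneg u]

theorem measurable_Pker : Measurable (Function.uncurry Pker) := by
  unfold Pker Function.uncurry; fun_prop

theorem measurable_Qker : Measurable (Function.uncurry Qker) := by
  unfold Qker Function.uncurry; fun_prop

theorem continuous_Pker {t : ℝ} (ht : 0 < t) : Continuous (Pker t) := by
  unfold Pker
  fun_prop (disch := intro u; positivity)

theorem Pker_eq_inv_one_add_sq {t : ℝ} (ht : 0 < t) (u : ℝ) :
    Pker t u = (π * t)⁻¹ * (1 + (u / t) ^ 2)⁻¹ := by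
  unfold Pker; field_simp

theorem integrable_Pker {t : ℝ} (ht : 0 < t) : Integrable (Pker t) := by
  rw [funext (Pker_eq_inv_one_add_sq ht)]
  exact (integrable_inv_one_add_sq.comp_div ht.ne').const_mul _

theorem integral_Pker {t : ℝ} (ht : 0 < t) : ∫ u, Pker t u = 1 := by
  simp_rw [Pker_eq_inv_one_add_sq ht]
  rw [integral_const_mul, Measure.integral_comp_div (fun u ↦ (1 + u ^ 2)⁻¹),
    integral_univ_inv_one_add_sq, abs_of_pos ht, smul_eq_mul]
  field_simp

theorem integrable_Qker {t : ℝ} (ht : 0 < t) : Integrable (Qker t) :=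
  ((integrable_Pker ht).div_const t).mono' measurable_Qker.of_uncurry_left.aestronglyMeasurable
    (ae_of_all _ (abs_Qker_le ht))

theorem lintegral_enorm_Qker_le {t : ℝ} (ht : 0 < t) :
    ∫⁻ u, ‖Qker t u‖ₑ ≤ ENNReal.ofReal t⁻¹ := by
  rw [← ofReal_integral_norm_eq_lintegral_enorm (integrable_Qker ht)]
  refine ENNReal.ofReal_le_ofReal ?_
  calc ∫ u, ‖Qker t u‖
      ≤ ∫ u, Pker t u / t := integral_mono (integrable_Qker ht).norm
        ((integrable_Pker ht).div_const t) (abs_Qker_le ht)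
    _ = t⁻¹ := by rw [integral_div, integral_Pker ht, one_div]

theorem hasDerivAt_Pker_left {t : ℝ} (ht : 0 < t) (u : ℝ) :
    HasDerivAt (fun s ↦ Pker s u) (Qker t u) t := by
  have h := (hasDerivAt_id' t).div
    (((hasDerivAt_pow 2 t).add_const (u ^ 2)).const_mul π) (by positivity)
  refine h.congr_deriv ?_
  simp only [Qker]
  field_simp
  push_cast
  ring

theorem tendsto_Pker_atTop (u : ℝ) : Tendsto (fun t ↦ Pker t u) atTop (𝓝 0) := by
  have hbound : Tendsto (fun t : ℝ ↦ (π * t)⁻¹) atTop (𝓝 0) :=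
    (tendsto_id.const_mul_atTop Real.pi_pos).inv_tendsto_atTop
  refine squeeze_zero' ?_ ?_ hbound <;> filter_upwards [eventually_gt_atTop 0] with t ht
  exacts [Pker_nonneg ht.le u, Pker_le ht u]

theorem integrableOn_Qker_left {t : ℝ} (ht : 0 < t) (u : ℝ) :
    IntegrableOn (Qker · u) (Ioi t) := by
  have h : IntegrableOn (fun s : ℝ ↦ π⁻¹ * s ^ (-2 : ℝ)) (Ioi t) :=
    (integrableOn_Ioi_rpow_of_lt (by norm_num) ht).const_mul _
  refine h.mono' measurable_Qker.of_uncurry_right.aestronglyMeasurable ?_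
  filter_upwards [ae_restrict_mem measurableSet_Ioi] with s hs
  have hs0 : 0 < s := ht.trans hs
  refine (abs_Qker_le hs0 u).trans ((Pker_div_self_le hs0 u).trans_eq ?_)
  rw [mul_inv, Real.rpow_neg hs0.le, Real.rpow_two]

theorem setIntegral_Ioi_Qker {t : ℝ} (ht : 0 < t) (u : ℝ) :
    ∫ s in Ioi t, Qker s u = -Pker t u := by
  rw [integral_Ioi_of_hasDerivAt_of_tendsto'
    (fun s hs ↦ hasDerivAt_Pker_left (ht.trans_le hs) u) (integrableOn_Qker_left ht u)
    (tendsto_Pker_atTop u), zero_sub]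

end PoissonKernel

section Semigroup

open scoped FourierTransform Convolution

theorem integrable_exp_neg_mul_abs {b : ℝ} (hb : 0 < b) :
    Integrable fun ξ : ℝ ↦ (Real.exp (-b * |ξ|) : ℂ) := by
  have hIic : IntegrableOn (fun ξ : ℝ ↦ Real.exp (-b * |ξ|)) (Iic 0) :=
    (integrableOn_exp_mul_Iic hb 0).congr_fun
      (fun ξ (hξ : ξ ≤ 0) ↦ by simp only [abs_of_nonpos hξ, neg_mul_neg]) measurableSet_Iic
  have hIoi : IntegrableOn (fun ξ : ℝ ↦ Real.exp (-b * |ξ|)) (Ioi 0) :=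
    (integrableOn_exp_mul_Ioi (neg_neg_of_pos hb) 0).congr_fun
      (fun ξ (hξ : 0 < ξ) ↦ by simp only [abs_of_pos hξ]) measurableSet_Ioi
  rw [← integrableOn_univ, ← Iic_union_Ioi (a := (0 : ℝ))]
  exact (hIic.union hIoi).ofReal

theorem integral_exp_mul_I_mul_exp_neg_mul_abs {b : ℝ} (hb : 0 < b) (c : ℝ) :
    ∫ ξ : ℝ, Complex.exp (c * ξ * Complex.I) * (Real.exp (-b * |ξ|) : ℂ) =
      (2 * b / (b ^ 2 + c ^ 2) : ℝ) := by
  have hint : Integrable fun ξ : ℝ ↦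
      Complex.exp (c * ξ * Complex.I) * (Real.exp (-b * |ξ|) : ℂ) := by
    refine (integrable_exp_neg_mul_abs hb).bdd_mul (c := 1) (by fun_prop) (ae_of_all _ fun ξ ↦ ?_)
    exact_mod_cast (Complex.norm_exp_ofReal_mul_I (c * ξ)).le
  have hneg : ∫ ξ in Iic (0 : ℝ), Complex.exp (c * ξ * Complex.I) * (Real.exp (-b * |ξ|) : ℂ) =
      1 / (b + c * Complex.I) := by
    have h := integral_exp_mul_complex_Iic (a := b + c * Complex.I) (by simpa using hb) 0
    rw [Complex.ofReal_zero, mul_zero, Complex.exp_zero] at h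
    rw [← h]
    refine setIntegral_congr_fun measurableSet_Iic fun ξ (hξ : ξ ≤ 0) ↦ ?_
    rw [abs_of_nonpos hξ, Complex.ofReal_exp, ← Complex.exp_add]
    push_cast
    ring_nf
  have hpos : ∫ ξ in Ioi (0 : ℝ), Complex.exp (c * ξ * Complex.I) * (Real.exp (-b * |ξ|) : ℂ) =
      -1 / (-b + c * Complex.I) := by
    have h := integral_exp_mul_complex_Ioi (a := -b + c * Complex.I) (by simpa using hb) 0
    rw [Complex.ofReal_zero, mul_zero, Complex.exp_zero] at h
    rw [← h]
    refine setIntegral_congr_fun measurableSet_Ioi fun ξ (hξ : 0 < ξ) ↦ ?_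
    rw [abs_of_pos hξ, Complex.ofReal_exp, ← Complex.exp_add]
    push_cast
    ring_nf
  rw [← setIntegral_univ, ← Iic_union_Ioi (a := (0:ℝ)), setIntegral_union
    (Iic_disjoint_Ioi le_rfl) measurableSet_Ioi hint.integrableOn hint.integrableOn, hneg, hpos]
  have h1 : (b + c * Complex.I : ℂ) ≠ 0 := fun h ↦ hb.ne' (by simpa using congrArg Complex.re h)
  have h2 : (-b + c * Complex.I : ℂ) ≠ 0 := fun h ↦ hb.ne' (by simpa using congrArg Complex.re h)
  have h3 : (b ^ 2 + c ^ 2 : ℂ) ≠ 0 := by norm_cast; positivity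
  push_cast
  field_simp
  linear_combination (-2 * b * c ^ 2 : ℂ) * Complex.I_sq

theorem fourierInv_exp_neg_mul_abs {t : ℝ} (ht : 0 < t) :
    𝓕⁻ (fun ξ : ℝ ↦ (Real.exp (-(2 * π * t) * |ξ|) : ℂ)) = fun u ↦ (Pker t u : ℂ) := by
  ext u
  have h := integral_exp_mul_I_mul_exp_neg_mul_abs (b := 2 * π * t) (by positivity)
    (2 * π * u)
  rw [Real.fourierInv_eq']
  calc _ = _ := integral_congr_ae (ae_of_all _ fun ξ ↦ by
          simp only [RCLike.inner_apply, conj_trivial, smul_eq_mul]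
          push_cast
          ring_nf)
    _ = _ := h
    _ = (Pker t u : ℂ) := by
        congr 1
        unfold Pker
        field_simp

theorem fourier_Pker {t : ℝ} (ht : 0 < t) :
    𝓕 (fun u ↦ (Pker t u : ℂ)) = fun ξ : ℝ ↦ (Real.exp (-(2 * π * t) * |ξ|) : ℂ) := by
  have hE : Integrable fun ξ : ℝ ↦ (Real.exp (-(2 * π * t) * |ξ|) : ℂ) :=
    integrable_exp_neg_mul_abs (by positivity)
  have hE' : Integrable (𝓕 fun ξ : ℝ ↦ (Real.exp (-(2 * π * t) * |ξ|) : ℂ)) := by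
    refine Integrable.congr (f := fun u ↦ (Pker t u : ℂ)) (integrable_Pker ht).ofReal
      (ae_of_all _ fun u ↦ ?_)
    rw [← neg_neg u, ← Real.fourierInv_eq_fourier_neg, fourierInv_exp_neg_mul_abs ht]
    simp only [neg_neg, Pker_neg_right]
  rw [← fourierInv_exp_neg_mul_abs ht]
  exact Continuous.fourier_fourierInv_eq (by fun_prop) hE hE'

theorem convolution_Pker_Pker {s t : ℝ} (hs : 0 < s) (ht : 0 < t) :
    (fun u ↦ (Pker s u : ℂ)) ⋆[ContinuousLinearMap.mul ℂ ℂ] (fun u ↦ (Pker t u : ℂ)) =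
      fun u ↦ (Pker (s + t) u : ℂ) := by
  have hPs : Integrable fun u ↦ (Pker s u : ℂ) := (integrable_Pker hs).ofReal
  have hPt : Integrable fun u ↦ (Pker t u : ℂ) := (integrable_Pker ht).ofReal
  have hcont : Continuous
      ((fun u ↦ (Pker s u : ℂ)) ⋆[ContinuousLinearMap.mul ℂ ℂ] (fun u ↦ (Pker t u : ℂ))) := by
    refine BddAbove.continuous_convolution_right_of_integrable _ ⟨(π * t)⁻¹, ?_⟩ hPs
      (Complex.continuous_ofReal.comp (continuous_Pker ht))
    rintro _ ⟨u, rfl⟩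
    simpa [abs_of_nonneg (Pker_nonneg ht.le u)] using Pker_le ht u
  have hfourier : 𝓕 ((fun u ↦ (Pker s u : ℂ)) ⋆[ContinuousLinearMap.mul ℂ ℂ]
      (fun u ↦ (Pker t u : ℂ))) =
        fun ξ : ℝ ↦ (Real.exp (-(2 * π * (s + t)) * |ξ|) : ℂ) := by
    ext ξ
    rw [Real.fourier_mul_convolution_eq hPs hPt, fourier_Pker hs, fourier_Pker ht,
      ← Complex.ofReal_mul, ← Real.exp_add]
    ring_nf
  rw [← hcont.fourierInv_fourier_eq (hPs.integrable_convolution _ hPt), hfourier,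
    fourierInv_exp_neg_mul_abs (add_pos hs ht)]
  rw [hfourier]
  exact integrable_exp_neg_mul_abs (by positivity)

theorem integral_Pker_mul_Pker {s t : ℝ} (hs : 0 < s) (ht : 0 < t) (u : ℝ) :
    ∫ v, Pker s v * Pker t (u - v) = Pker (s + t) u := by
  have h := congrFun (convolution_Pker_Pker hs ht) u
  simp only [convolution_def, ContinuousLinearMap.mul_apply'] at h
  exact_mod_cast h

theorem integrable_Pker_mul_Pker {s t : ℝ} (hs : 0 < s) (ht : 0 < t) (u : ℝ) :
    Integrable fun v ↦ Pker s v * Pker t (u - v) :=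
  (integrable_Pker hs).mul_bdd
    (measurable_Pker.of_uncurry_left.comp (measurable_const_sub u)).aestronglyMeasurable
    (ae_of_all _ fun _ ↦ (abs_of_nonneg (Pker_nonneg ht.le _)).trans_le (Pker_le ht _))

theorem integrable_Pker_mul_Qker {s t : ℝ} (hs : 0 < s) (ht : 0 < t) (u : ℝ) :
    Integrable fun v ↦ Pker s v * Qker t (u - v) :=
  (integrable_Pker hs).mul_bdd
    (measurable_Qker.of_uncurry_left.comp (measurable_const_sub u)).aestronglyMeasurable
    (ae_of_all _ fun _ ↦ (abs_Qker_le ht _).trans (Pker_div_self_le ht _))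

theorem hasDerivAt_integral_Pker_mul_Pker {s t : ℝ} (hs : 0 < s) (ht : 0 < t) (u : ℝ) :
    HasDerivAt (fun τ ↦ ∫ v, Pker s v * Pker τ (u - v))
      (∫ v, Pker s v * Qker t (u - v)) t := by
  have hmeas (τ : ℝ) : AEStronglyMeasurable (fun v ↦ Pker s v * Pker τ (u - v)) :=
    (measurable_Pker.of_uncurry_left.mul
      (measurable_Pker.of_uncurry_left.comp (measurable_const_sub u))).aestronglyMeasurable
  have hbound (v τ : ℝ) (hτ : τ ∈ Ioi (t / 2)) :
      ‖Pker s v * Qker τ (u - v)‖ ≤ Pker s v * (π * (t / 2) ^ 2)⁻¹ := by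
    have hτ' : t / 2 < τ := hτ
    have hτ0 : 0 < τ := (half_pos ht).trans hτ
    rw [norm_mul, Real.norm_of_nonneg (Pker_nonneg hs.le v)]
    gcongr
    · exact Pker_nonneg hs.le v
    · refine (abs_Qker_le hτ0 _).trans ((Pker_div_self_le hτ0 _).trans ?_)
      gcongr
  exact (hasDerivAt_integral_of_dominated_loc_of_deriv_le (Ioi_mem_nhds (half_lt_self ht))
    (.of_forall hmeas) (integrable_Pker_mul_Pker hs ht u) (integrable_Pker_mul_Qker hs ht u).1
    (ae_of_all _ hbound) ((integrable_Pker hs).mul_const _) (ae_of_all _ fun v τ hτ ↦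
      (hasDerivAt_Pker_left ((half_pos ht).trans hτ) (u - v)).const_mul (Pker s v))).2

theorem integral_Pker_mul_Qker {s t : ℝ} (hs : 0 < s) (ht : 0 < t) (u : ℝ) :
    ∫ v, Pker s v * Qker t (u - v) = Qker (s + t) u := by
  refine (hasDerivAt_integral_Pker_mul_Pker hs ht u).unique
    (((hasDerivAt_Pker_left (add_pos hs ht) u).comp_const_add s t).congr_of_eventuallyEq ?_)
  filter_upwards [Ioi_mem_nhds ht] with τ hτ using integral_Pker_mul_Pker hs hτ u

end Semigroup

section Modulus

theorem hasDerivAt_Pker_right {t : ℝ} (ht : 0 < t) (u : ℝ) :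
    HasDerivAt (Pker t) (-(2 * t * u) / (π * (t ^ 2 + u ^ 2) ^ 2)) u := by
  have h := (hasDerivAt_const u t).div
    (((hasDerivAt_pow 2 u).const_add (t ^ 2)).const_mul π) (by positivity)
  refine h.congr_deriv ?_
  field_simp
  push_cast
  ring

theorem abs_deriv_Pker_le {t : ℝ} (ht : 0 < t) (u : ℝ) : |deriv (Pker t) u| ≤ Pker t u / t := by
  rw [(hasDerivAt_Pker_right ht u).deriv]
  refine abs_div_pi_mul_sq_le_Pker_div_self ht (abs_le.2 ⟨?_, ?_⟩) <;>
    linarith [sq_nonneg (t - u), sq_nonneg (t + u)]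

theorem integrable_deriv_Pker {t : ℝ} (ht : 0 < t) : Integrable (deriv (Pker t)) :=
  ((integrable_Pker ht).div_const t).mono' (aestronglyMeasurable_deriv _ _)
    (ae_of_all _ (abs_deriv_Pker_le ht))

theorem integral_abs_deriv_Pker {t : ℝ} (ht : 0 < t) :
    ∫ u, |deriv (Pker t) u| = 2 / (π * t) := by
  have habs (u : ℝ) : |deriv (Pker t) u| = -deriv (Pker t) |u| := by
    rw [(hasDerivAt_Pker_right ht u).deriv, (hasDerivAt_Pker_right ht |u|).deriv, abs_div, abs_neg,
      abs_mul, abs_of_pos (by positivity : 0 < 2 * t), sq_abs,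
      abs_of_nonneg (by positivity : 0 ≤ π * (t ^ 2 + u ^ 2) ^ 2)]
    ring
  have hderiv (u : ℝ) : HasDerivAt (Pker t) (deriv (Pker t) u) u :=
    (hasDerivAt_Pker_right ht u).differentiableAt.hasDerivAt
  have hlim : Tendsto (Pker t) atTop (𝓝 0) :=
    tendsto_zero_of_hasDerivAt_of_integrableOn_Ioi (fun u _ ↦ hderiv u)
      (integrable_deriv_Pker ht).integrableOn (integrable_Pker ht).integrableOn (a := 0)
  simp_rw [habs]
  rw [integral_comp_abs (f := fun u ↦ -deriv (Pker t) u), integral_neg,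
    integral_Ioi_of_hasDerivAt_of_tendsto' (fun u _ ↦ hderiv u)
      (integrable_deriv_Pker ht).integrableOn hlim]
  simp only [Pker]
  field_simp
  ring

theorem lintegral_enorm_Pker_add_sub_le {t : ℝ} (ht : 0 < t) (a : ℝ) :
    ∫⁻ v, ‖Pker t (v + a) - Pker t v‖ₑ ≤ ENNReal.ofReal (2 * |a| / (π * t)) := by
  refine (lintegral_enorm_comp_add_right_sub_le
    (fun u ↦ (hasDerivAt_Pker_right ht u).differentiableAt.hasDerivAt)
    (integrable_deriv_Pker ht) a).trans_eq ?_
  rw [← ofReal_integral_norm_eq_lintegral_enorm (integrable_deriv_Pker ht)]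
  simp only [Real.norm_eq_abs]
  rw [integral_abs_deriv_Pker ht, ← ENNReal.ofReal_mul (abs_nonneg a)]
  ring_nf

end Modulus

end HR

namespace HR

variable {X : Type*} [NormedAddCommGroup X] [NormedSpace ℝ X]

section Translates

variable {Ω : Type*} [MeasurableSpace Ω] {ν : Measure Ω} {p : ℝ≥0∞} {f : HR → X}

theorem vmul_vmul (s t : ℝ) (h : HR) : vmul s (vmul t h) = vmul (s + t) h := by
  simp only [vmul, add_comm s, add_assoc]

theorem conv_eq_integral_vmul (ψ : ℝ → ℝ) (f : HR → X) (h : HR) :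
    conv ψ f h = ∫ u, ψ u • f (vmul (-u) h) := rfl

theorem measurable_vmul : Measurable (Function.uncurry vmul) := by
  unfold vmul Function.uncurry; fun_prop

theorem measurePreserving_vmul (t : ℝ) : MeasurePreserving (vmul t) := by
  have hvmul : vmul t = Prod.map id (Prod.map id (· + t)) := rfl
  rw [hvmul]
  exact (MeasurePreserving.id volume).prod
    ((MeasurePreserving.id volume).prod (measurePreserving_add_right volume t))

theorem quasiMeasurePreserving_vmul [SFinite ν] {τ : Ω → ℝ} (hτ : Measurable τ) :
    Measure.QuasiMeasurePreserving (fun x : HR × Ω ↦ vmul (τ x.2) x.1) (volume.prod ν) volume := by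
  exact QuasiMeasurePreserving.prod_of_left (measurable_vmul.comp
    ((hτ.comp measurable_snd).prodMk measurable_fst))
    (ae_of_all _ fun ω ↦ (measurePreserving_vmul (τ ω)).quasiMeasurePreserving)

theorem eLpNorm_lintegral_smul_vmul_le [SFinite ν] (hp : 1 ≤ p) (hp' : p ≠ ∞) {k : Ω → ℝ}
    (hk : Measurable k) {g : Ω → HR → X} (hg : StronglyMeasurable (Function.uncurry g))
    {τ : Ω → ℝ} (hτ : Measurable τ) :
    eLpNorm (fun h ↦ ∫⁻ ω, ‖k ω • g ω (vmul (τ ω) h)‖ₑ ∂ν) p ≤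
      ∫⁻ ω, ‖k ω‖ₑ * eLpNorm (g ω) p ∂ν := by
  have hF : StronglyMeasurable (Function.uncurry fun h ω ↦ k ω • g ω (vmul (τ ω) h)) :=
    (hk.comp measurable_snd).stronglyMeasurable.smul (hg.comp_measurable (measurable_snd.prodMk
      (measurable_vmul.comp ((hτ.comp measurable_snd).prodMk measurable_fst))))
  refine (eLpNorm_lintegral_le hp hp' hF.enorm).trans_eq (lintegral_congr fun ω ↦ ?_)
  have hgω : AEStronglyMeasurable (g ω) :=
    (hg.comp_measurable measurable_prodMk_left).aestronglyMeasurable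
  rw [← eLpNorm_comp_measurePreserving hgω (measurePreserving_vmul (τ ω))]
  exact (eLpNorm_enorm _).trans (eLpNorm_const_smul (k ω) _ _ _)

theorem ae_integrable_smul_vmul [SFinite ν] (hp : 1 ≤ p) (hp' : p ≠ ∞) {k : Ω → ℝ}
    (hk : Measurable k) (hk' : Integrable k ν) {τ : Ω → ℝ} (hτ : Measurable τ)
    (hf : StronglyMeasurable f) (hf' : MemLp f p) :
    ∀ᵐ h, Integrable (fun ω ↦ k ω • f (vmul (τ ω) h)) ν := by
  have hF : StronglyMeasurable (Function.uncurry fun h ω ↦ k ω • f (vmul (τ ω) h)) :=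
    (hk.comp measurable_snd).stronglyMeasurable.smul (hf.comp_measurable
      (measurable_vmul.comp ((hτ.comp measurable_snd).prodMk measurable_fst)))
  have hbound := eLpNorm_lintegral_smul_vmul_le (ν := ν) (g := fun _ ↦ f) hp hp' hk
    (hf.comp_measurable measurable_snd) hτ
  rw [lintegral_mul_const' _ _ hf'.2.ne] at hbound
  filter_upwards [ae_lt_top_of_eLpNorm_lt_top (zero_lt_one.trans_le hp).ne' hp'
    hF.enorm.lintegral_prod_right' (hbound.trans_lt (ENNReal.mul_lt_top hk'.2 hf'.2))] with h hh
  exact ⟨(hF.comp_measurable measurable_prodMk_left).aestronglyMeasurable, hh⟩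

end Translates

section Convolution

variable {Ω : Type*} [MeasurableSpace Ω] {ν : Measure Ω} {p : ℝ≥0∞} {f : HR → X} {ψ φ : ℝ → ℝ}

theorem conv_congr_ae_kernel (h : ψ =ᵐ[volume] φ) (f : HR → X) : conv ψ f = conv φ f :=
  funext fun _ ↦ integral_congr_ae (h.mono fun u hu ↦ by simp only [hu])

theorem conv_congr_ae {g : HR → X} (ψ : ℝ → ℝ) (h : f =ᵐ[volume] g) :
    conv ψ f =ᵐ[volume] conv ψ g := by
  have hτ := (quasiMeasurePreserving_vmul (ν := volume) measurable_neg).ae h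
  filter_upwards [Measure.ae_ae_of_ae_prod hτ] with x hx
  exact integral_congr_ae (hx.mono fun u hu ↦ congrArg (ψ u • ·) hu)

theorem conv_comp_add_right (ψ : ℝ → ℝ) (f : HR → X) (a : ℝ) (h : HR) :
    conv (fun u ↦ ψ (u + a)) f h = conv ψ f (vmul a h) := by
  rw [conv_eq_integral_vmul, conv_eq_integral_vmul,
    ← integral_add_right_eq_self (fun u ↦ ψ u • f (vmul (-u) (vmul a h))) a]
  simp only [vmul_vmul, neg_add, neg_add_cancel_right]

theorem conv_const_mul (c : ℝ) (ψ : ℝ → ℝ) (f : HR → X) (h : HR) :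
    conv (fun u ↦ c * ψ u) f h = c • conv ψ f h := by
  simp only [conv, mul_smul, integral_smul]

theorem stronglyMeasurable_conv {K : Ω → ℝ → ℝ} (hK : Measurable (Function.uncurry K))
    (hf : StronglyMeasurable f) :
    StronglyMeasurable fun x : Ω × HR ↦ conv (K x.1) f x.2 := by
  have hK' : Measurable fun y : (Ω × HR) × ℝ ↦ K y.1.1 y.2 :=
    hK.comp ((measurable_fst.comp measurable_fst).prodMk measurable_snd)
  have hτ : Measurable fun y : (Ω × HR) × ℝ ↦ vmul (-y.2) y.1.2 :=
    measurable_vmul.comp (measurable_snd.neg.prodMk (measurable_snd.comp measurable_fst))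
  exact (hK'.stronglyMeasurable.smul (hf.comp_measurable hτ)).integral_prod_right'

theorem ae_conv_sub (hp : 1 ≤ p) (hp' : p ≠ ∞) (hψ : Measurable ψ) (hψ' : Integrable ψ)
    (hφ : Measurable φ) (hφ' : Integrable φ) (hf : StronglyMeasurable f) (hf' : MemLp f p) :
    ∀ᵐ h, conv (fun u ↦ ψ u - φ u) f h = conv ψ f h - conv φ f h := by
  filter_upwards [ae_integrable_smul_vmul hp hp' hψ hψ' measurable_neg hf hf',
    ae_integrable_smul_vmul hp hp' hφ hφ' measurable_neg hf hf'] with h hψh hφh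
  simp only [conv_eq_integral_vmul, sub_smul]
  exact integral_sub hψh hφh

theorem eLpNorm_conv_le (hp : 1 ≤ p) (hp' : p ≠ ∞) (hψ : Measurable ψ)
    (hf : StronglyMeasurable f) :
    eLpNorm (conv ψ f) p ≤ (∫⁻ u, ‖ψ u‖ₑ) * eLpNorm f p := by
  have hMinkowski := eLpNorm_lintegral_smul_vmul_le (ν := volume) (g := fun _ ↦ f) hp hp' hψ
    (hf.comp_measurable measurable_snd) measurable_neg
  rw [lintegral_mul_const _ hψ.enorm] at hMinkowski
  exact (eLpNorm_mono_enorm fun h ↦ enorm_integral_le_lintegral_enorm _).trans hMinkowski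

theorem memLp_conv (hp : 1 ≤ p) (hp' : p ≠ ∞) (hψ : Measurable ψ) (hψ' : Integrable ψ)
    (hf : MemLp f p) : MemLp (conv ψ f) p := by
  have hmk : StronglyMeasurable (hf.1.mk f) := hf.1.stronglyMeasurable_mk
  have hmkp : MemLp (hf.1.mk f) p := hf.ae_eq hf.1.ae_eq_mk
  have hconv := (stronglyMeasurable_conv (Ω := Unit) (K := fun _ ↦ ψ) (hψ.comp measurable_snd)
    hmk).comp_measurable (measurable_prodMk_left (x := ()))
  refine MemLp.ae_eq (conv_congr_ae ψ hf.1.ae_eq_mk).symm ⟨hconv.aestronglyMeasurable, ?_⟩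
  exact (eLpNorm_conv_le hp hp' hψ hmk).trans_lt (ENNReal.mul_lt_top hψ'.2 hmkp.2)

theorem ae_conv_integral [CompleteSpace X] [SFinite ν] (hp : 1 ≤ p) (hp' : p ≠ ∞)
    {K : Ω → ℝ → ℝ} (hK : Measurable (Function.uncurry K))
    (hK' : Integrable (Function.uncurry K) (ν.prod volume))
    (hf : StronglyMeasurable f) (hf' : MemLp f p) :
    ∀ᵐ h, conv (fun u ↦ ∫ ω, K ω u ∂ν) f h = ∫ ω, conv (K ω) f h ∂ν := by
  filter_upwards [ae_integrable_smul_vmul hp hp' hK hK' measurable_snd.neg hf hf'] with h hh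
  simp only [conv_eq_integral_vmul]
  rw [integral_integral_swap hh]
  exact integral_congr_ae (ae_of_all _ fun u ↦ (integral_smul_const _ _).symm)

end Convolution

section IncrementKernel

/-- The kernel `(r, v) ↦ (P_r(v + a) - P_r(v)) Q_r(u - v)`: by the semigroup property, its integral
over `v ∈ ℝ` and `r > t / 2` is `-1/2` times the increment `P_t(u + a) - P_t(u)`. -/
noncomputable def incrementKernel (a : ℝ) (x : ℝ × ℝ) (u : ℝ) : ℝ :=
  (Pker x.1 (x.2 + a) - Pker x.1 x.2) * Qker x.1 (u - x.2)

theorem measurable_Pker_add_sub (a : ℝ) :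
    Measurable fun x : ℝ × ℝ ↦ Pker x.1 (x.2 + a) - Pker x.1 x.2 :=
  (measurable_Pker.comp (measurable_fst.prodMk (measurable_snd.add_const a))).sub measurable_Pker

theorem measurable_incrementKernel (a : ℝ) : Measurable (Function.uncurry (incrementKernel a)) :=
  ((measurable_Pker_add_sub a).comp measurable_fst).mul (measurable_Qker.comp
    (measurable_fst.fst.prodMk (measurable_snd.sub measurable_fst.snd)))

theorem lintegral_enorm_Pker_add_sub_mul_le (a : ℝ) {t : ℝ} (ht : 0 < t) {N : ℝ → ℝ≥0∞}
    (hN : Measurable N) :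
    ∫⁻ x, ‖Pker x.1 (x.2 + a) - Pker x.1 x.2‖ₑ * N x.1 ∂(volume.restrict (Ioi t)).prod volume ≤
      ∫⁻ r in Ioi t, ENNReal.ofReal (2 * |a| / (π * r)) * N r := by
  have hk := (measurable_Pker_add_sub a).enorm
  refine (lintegral_prod _ (hk.mul (hN.comp measurable_fst)).aemeasurable).trans_le ?_
  refine setLIntegral_mono' measurableSet_Ioi fun r hr ↦ ?_
  calc ∫⁻ v, ‖Pker r (v + a) - Pker r v‖ₑ * N r
      = (∫⁻ v, ‖Pker r (v + a) - Pker r v‖ₑ) * N r :=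
        lintegral_mul_const _ (hk.comp measurable_prodMk_left)
    _ ≤ ENNReal.ofReal (2 * |a| / (π * r)) * N r := by
        gcongr
        exact lintegral_enorm_Pker_add_sub_le (ht.trans hr) a

theorem integrable_incrementKernel (a : ℝ) {t : ℝ} (ht : 0 < t) :
    Integrable (Function.uncurry (incrementKernel a))
      (((volume.restrict (Ioi t)).prod volume).prod volume) := by
  have hmeas := measurable_incrementKernel a
  have hslice (x : ℝ × ℝ) : ∫⁻ u, ‖incrementKernel a x u‖ₑ =
      ‖Pker x.1 (x.2 + a) - Pker x.1 x.2‖ₑ * ∫⁻ u, ‖Qker x.1 u‖ₑ := by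
    simp only [incrementKernel, enorm_mul]
    rw [lintegral_const_mul' _ _ enorm_ne_top,
      lintegral_sub_right_eq_self (fun u ↦ ‖Qker x.1 u‖ₑ)]
  have hbound (r : ℝ) (hr : r ∈ Ioi t) :
      ENNReal.ofReal (2 * |a| / (π * r)) * ∫⁻ u, ‖Qker r u‖ₑ ≤
        ENNReal.ofReal (2 * |a| / π * r ^ (-2 : ℝ)) := by
    have hr0 : 0 < r := ht.trans hr
    refine (mul_le_mul_right (lintegral_enorm_Qker_le hr0) _).trans_eq ?_
    rw [← ENNReal.ofReal_mul (by positivity), Real.rpow_neg hr0.le, Real.rpow_two]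
    field_simp
  have hfinite : Integrable (fun r : ℝ ↦ 2 * |a| / π * r ^ (-2 : ℝ))
      (volume.restrict (Ioi t)) :=
    (integrableOn_Ioi_rpow_of_lt (by norm_num) ht).const_mul _
  refine ⟨hmeas.aestronglyMeasurable, ?_⟩
  rw [hasFiniteIntegral_iff_enorm, lintegral_prod _ hmeas.enorm.aemeasurable]
  simp only [Function.uncurry_apply_pair, hslice]
  have hQ : Measurable fun r ↦ ∫⁻ u, ‖Qker r u‖ₑ := measurable_Qker.enorm.lintegral_prod_right'
  exact ((lintegral_enorm_Pker_add_sub_mul_le a ht hQ).trans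
    (setLIntegral_mono' measurableSet_Ioi hbound)).trans_lt hfinite.lintegral_lt_top

theorem integral_incrementKernel_right (a : ℝ) {r : ℝ} (hr : 0 < r) (u : ℝ) :
    ∫ v, incrementKernel a (r, v) u = Qker (2 * r) (u + a) - Qker (2 * r) u := by
  have htranslate (v : ℝ) : Pker r (v + a) * Qker r (u - v) =
      Pker r (v + a) * Qker r (u + a - (v + a)) := by rw [add_sub_add_right_eq_sub]
  simp only [incrementKernel, sub_mul]
  rw [integral_sub, two_mul, integral_Pker_mul_Qker hr hr, ← integral_Pker_mul_Qker hr hr (u + a)]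
  · simp_rw [htranslate]
    rw [integral_add_right_eq_self (fun v ↦ Pker r v * Qker r (u + a - v))]
  · simp_rw [htranslate]
    exact (integrable_Pker_mul_Qker hr hr (u + a)).comp_add_right a
  · exact integrable_Pker_mul_Qker hr hr u

theorem setIntegral_Ioi_Qker_two_mul {t : ℝ} (ht : 0 < t) (u : ℝ) :
    ∫ r in Ioi (t / 2), Qker (2 * r) u = -(Pker t u / 2) := by
  rw [integral_comp_mul_left_Ioi (fun s ↦ Qker s u) (t / 2) two_pos, mul_div_cancel₀ t two_ne_zero,
    setIntegral_Ioi_Qker ht, smul_eq_mul]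
  ring

theorem ae_Pker_add_sub_eq_integral_incrementKernel (a : ℝ) {t : ℝ} (ht : 0 < t) :
    (fun u ↦ Pker t (u + a) - Pker t u) =ᵐ[volume] fun u ↦
      -2 * ∫ x, incrementKernel a x u ∂(volume.restrict (Ioi (t / 2))).prod volume := by
  have hQ (u : ℝ) : IntegrableOn (fun r ↦ Qker (2 * r) u) (Ioi (t / 2)) :=
    (integrableOn_Ioi_comp_mul_left_iff (fun s ↦ Qker s u) _ two_pos).2
      ((mul_div_cancel₀ t two_ne_zero).symm ▸ integrableOn_Qker_left ht u)
  filter_upwards [(integrable_incrementKernel a (half_pos ht)).prod_left_ae] with u hu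
  rw [integral_prod (incrementKernel a · u) hu, setIntegral_congr_fun measurableSet_Ioi fun r hr ↦
    integral_incrementKernel_right a ((half_pos ht).trans hr) u, integral_sub (hQ _) (hQ _),
    setIntegral_Ioi_Qker_two_mul ht, setIntegral_Ioi_Qker_two_mul ht]
  ring

end IncrementKernel

section IncrementBound

variable {p : ℝ≥0∞} {f : HR → X}

theorem conv_incrementKernel (a : ℝ) (x : ℝ × ℝ) (f : HR → X) (h : HR) :
    conv (incrementKernel a x) f h =
      (Pker x.1 (x.2 + a) - Pker x.1 x.2) • conv (Qker x.1) f (vmul (-x.2) h) := by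
  rw [← conv_comp_add_right]
  exact conv_const_mul _ _ f h

theorem ae_conv_Pker_vmul_sub [CompleteSpace X] (hp : 1 ≤ p) (hp' : p ≠ ∞)
    (hf : StronglyMeasurable f) (hf' : MemLp f p) (a : ℝ) {t : ℝ} (ht : 0 < t) :
    ∀ᵐ h, conv (Pker t) f (vmul a h) - conv (Pker t) f h =
      (-2 : ℝ) • ∫ x, (Pker x.1 (x.2 + a) - Pker x.1 x.2) • conv (Qker x.1) f (vmul (-x.2) h)
        ∂(volume.restrict (Ioi (t / 2))).prod volume := by
  have hP : Measurable (Pker t) := measurable_Pker.of_uncurry_left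
  filter_upwards [ae_conv_sub hp hp' (hP.comp (measurable_add_const a))
    ((integrable_Pker ht).comp_add_right a) hP (integrable_Pker ht) hf hf',
    ae_conv_integral hp hp' (measurable_incrementKernel a)
      (integrable_incrementKernel a (half_pos ht)) hf hf'] with h hsub hint
  rw [← conv_comp_add_right]
  simp only [← conv_incrementKernel]
  rw [← hint, ← conv_const_mul,
    ← conv_congr_ae_kernel (ae_Pker_add_sub_eq_integral_incrementKernel a ht)]
  exact hsub.symm

theorem eLpNorm_conv_Pker_vmul_sub_le [CompleteSpace X] (hp : 1 ≤ p) (hp' : p ≠ ∞)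
    (hf : StronglyMeasurable f) (hf' : MemLp f p) (a : ℝ) {t : ℝ} (ht : 0 < t) :
    eLpNorm (fun h ↦ conv (Pker t) f (vmul a h) - conv (Pker t) f h) p ≤
      ∫⁻ r in Ioi (t / 2),
        ENNReal.ofReal (4 * |a| / (π * r)) * eLpNorm (conv (Qker r) f) p := by
  have hQf := stronglyMeasurable_conv measurable_Qker hf
  have hN : Measurable fun r ↦ eLpNorm (conv (Qker r) f) p :=
    measurable_eLpNorm_prod_left (zero_lt_one.trans_le hp).ne' hp' hQf
  rw [eLpNorm_congr_ae (ae_conv_Pker_vmul_sub hp hp' hf hf' a ht)]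
  refine (eLpNorm_const_smul (-2 : ℝ) _ _ _).trans_le ?_
  have hMinkowski := eLpNorm_lintegral_smul_vmul_le
    (ν := (volume.restrict (Ioi (t / 2))).prod volume) (g := fun x ↦ conv (Qker x.1) f) hp hp'
    (measurable_Pker_add_sub a) (hQf.comp_measurable (measurable_fst.fst.prodMk measurable_snd))
    measurable_snd.neg
  have h := (eLpNorm_mono_enorm fun h ↦ enorm_integral_le_lintegral_enorm _).trans
    (hMinkowski.trans (lintegral_enorm_Pker_add_sub_mul_le a (half_pos ht) hN))
  refine (mul_le_mul_right h _).trans_eq ?_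
  rw [← lintegral_const_mul' _ _ enorm_ne_top]
  simp only [← mul_assoc, enorm_neg, Real.enorm_of_nonneg zero_le_two,
    ← ENNReal.ofReal_mul zero_le_two]
  ring_nf

end IncrementBound

section LittlewoodPaley

variable {p : ℝ≥0∞} {f : HR → X}

theorem eLpNorm_conv_Pker_vmul_self_sub_le [CompleteSpace X] (hp : 1 ≤ p) (hp' : p ≠ ∞)
    (hf : StronglyMeasurable f) (hf' : MemLp f p) {t : ℝ} (ht : 0 < t) :
    eLpNorm (fun h ↦ conv (Pker t) f (vmul t h) - conv (Pker t) f h) p ≤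
      ENNReal.ofReal t * ∫⁻ s in Ioi (1 / 2),
        ENNReal.ofReal (4 / (π * s)) * eLpNorm (conv (Qker (s * t)) f) p := by
  refine (eLpNorm_conv_Pker_vmul_sub_le hp hp' hf hf' t ht).trans_eq ?_
  rw [div_eq_mul_one_div t, setLIntegral_Ioi_comp_mul_left _ ht]
  congr 1
  refine setLIntegral_congr_fun measurableSet_Ioi fun s _ ↦ ?_
  simp only [mul_comm s, abs_of_pos ht]
  rw [mul_left_comm, mul_comm 4, mul_div_mul_left _ _ ht.ne']

theorem setLIntegral_Ioi_half_rpow_neg_half :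
    ∫⁻ s in Ioi (1 / 2 : ℝ), ENNReal.ofReal (4 / (π * s)) * ENNReal.ofReal (s ^ (-(1 / 2) : ℝ)) =
      ENNReal.ofReal (8 * √2 / π) := by
  have hexp : (-(3 / 2) : ℝ) < -1 := by norm_num
  have hintegrand (s : ℝ) (hs : s ∈ Ioi (1 / 2 : ℝ)) :
      ENNReal.ofReal (4 / (π * s)) * ENNReal.ofReal (s ^ (-(1 / 2) : ℝ)) =
        ENNReal.ofReal (4 / π * s ^ (-(3 / 2) : ℝ)) := by
    have hs0 : 0 < s := one_half_pos.trans hs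
    rw [← ENNReal.ofReal_mul (by positivity), show (-(3 / 2) : ℝ) = -(1 / 2) - 1 by norm_num,
      Real.rpow_sub_one hs0.ne']
    field_simp
  rw [setLIntegral_congr_fun measurableSet_Ioi hintegrand, ← ofReal_integral_eq_lintegral_ofReal
    ((integrableOn_Ioi_rpow_of_lt hexp one_half_pos).const_mul _), integral_const_mul,
    integral_Ioi_rpow_of_lt hexp one_half_pos, show (-(3 / 2) + 1 : ℝ) = -(1 / 2) by norm_num,
    Real.rpow_neg one_half_pos.le, ← Real.sqrt_eq_rpow, one_div, Real.sqrt_inv, inv_inv]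
  · ring_nf
  · filter_upwards [ae_restrict_mem measurableSet_Ioi] with s hs
    have hs0 : 0 < s := one_half_pos.trans hs
    positivity

theorem lintegral_rpow_mul_setLIntegral_Ioi_half_rpow_le {q : ℝ} (hq : 1 ≤ q) {G : ℝ → ℝ≥0∞}
    (hG : Measurable G) :
    (∫⁻ t in Ioi 0, ENNReal.ofReal (t ^ (q / 2 - 1)) *
        (∫⁻ s in Ioi (1 / 2), ENNReal.ofReal (4 / (π * s)) * G (s * t)) ^ q) ^ (1 / q) ≤
      ENNReal.ofReal (8 * √2 / π) *
        (∫⁻ t in Ioi 0, ENNReal.ofReal (t ^ (q / 2 - 1)) * G t ^ q) ^ (1 / q) := by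
  have hw : Measurable fun s : ℝ ↦ ENNReal.ofReal (4 / (π * s)) := by fun_prop
  let ν : Measure ℝ := (volume.restrict (Ioi (1 / 2))).withDensity
    fun s ↦ ENNReal.ofReal (4 / (π * s))
  have hν : ∀ᵐ s ∂ν, 0 < s := (withDensity_absolutelyContinuous _ _).ae_le <| by
    filter_upwards [ae_restrict_mem measurableSet_Ioi] with s hs using one_half_pos.trans hs
  have hνlintegral (g : ℝ → ℝ≥0∞) (hg : Measurable g) :
      ∫⁻ s, g s ∂ν = ∫⁻ s in Ioi (1 / 2), ENNReal.ofReal (4 / (π * s)) * g s :=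
    lintegral_withDensity_eq_lintegral_mul _ hw hg
  have hHardy := lintegral_rpow_mul_lintegral_comp_mul_rpow_le hq (1 / 2) hν hG
  rw [hνlintegral _ (by fun_prop), setLIntegral_Ioi_half_rpow_neg_half,
    one_div_mul_eq_div] at hHardy
  have hνG (t : ℝ) := hνlintegral (fun s ↦ G (s * t)) (hG.comp (measurable_mul_const t))
  simpa only [hνG] using hHardy

theorem lintegral_eLpNorm_conv_Pker_vmul_sub_le_of_stronglyMeasurable [CompleteSpace X]
    {q : ℝ} (hp : 1 ≤ p) (hp' : p ≠ ∞) (hq : 1 ≤ q)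
    (hf : StronglyMeasurable f) (hf' : MemLp f p) :
    (∫⁻ t in Ioi 0, ENNReal.ofReal (t ^ (-(1 + q / 2))) *
        eLpNorm (fun h ↦ conv (Pker t) f (vmul t h) - conv (Pker t) f h) p ^ q) ^ (1 / q) ≤
      ENNReal.ofReal (8 * √2 / π) *
        (∫⁻ t in Ioi 0, ENNReal.ofReal (t ^ (q / 2 - 1)) *
          eLpNorm (conv (Qker t) f) p ^ q) ^ (1 / q) := by
  have hq0 : 0 < q := zero_lt_one.trans_le hq
  let G : ℝ → ℝ≥0∞ := fun s ↦ eLpNorm (conv (Qker s) f) p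
  have hG : Measurable G := measurable_eLpNorm_prod_left (zero_lt_one.trans_le hp).ne' hp'
    (stronglyMeasurable_conv measurable_Qker hf)
  refine le_trans ?_ (lintegral_rpow_mul_setLIntegral_Ioi_half_rpow_le hq hG)
  gcongr ?_ ^ (1 / q)
  refine setLIntegral_mono' measurableSet_Ioi fun t (ht : 0 < t) ↦ ?_
  calc _ ≤ ENNReal.ofReal (t ^ (-(1 + q / 2))) * (ENNReal.ofReal t *
          ∫⁻ s in Ioi (1 / 2), ENNReal.ofReal (4 / (π * s)) * G (s * t)) ^ q := by
        gcongr
        exact eLpNorm_conv_Pker_vmul_self_sub_le hp hp' hf hf' ht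
    _ = _ := by
        rw [ENNReal.mul_rpow_of_nonneg _ _ hq0.le, ENNReal.ofReal_rpow_of_pos ht, ← mul_assoc,
          ← ENNReal.ofReal_mul (by positivity), ← Real.rpow_add ht,
          show -(1 + q / 2) + q = q / 2 - 1 by ring]

theorem lintegral_eLpNorm_conv_Pker_vmul_sub_le [CompleteSpace X]
    {q : ℝ} (hp : 1 ≤ p) (hp' : p ≠ ∞) (hq : 1 ≤ q) (hf : MemLp f p) :
    (∫⁻ t in Ioi 0, ENNReal.ofReal (t ^ (-(1 + q / 2))) *
        eLpNorm (fun h ↦ conv (Pker t) f (vmul t h) - conv (Pker t) f h) p ^ q) ^ (1 / q) ≤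
      ENNReal.ofReal (8 * √2 / π) *
        (∫⁻ t in Ioi 0, ENNReal.ofReal (t ^ (q / 2 - 1)) *
          eLpNorm (conv (Qker t) f) p ^ q) ^ (1 / q) := by
  have hmk := hf.1.ae_eq_mk
  have hQ (t : ℝ) := eLpNorm_congr_ae (p := p) (conv_congr_ae (Qker t) hmk)
  have hP (t : ℝ) : eLpNorm (fun h ↦ conv (Pker t) f (vmul t h) - conv (Pker t) f h) p =
      eLpNorm (fun h ↦ conv (Pker t) (hf.1.mk f) (vmul t h) - conv (Pker t) (hf.1.mk f) h) p :=
    eLpNorm_congr_ae (((measurePreserving_vmul t).quasiMeasurePreserving.ae_eq_comp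
      (conv_congr_ae (Pker t) hmk)).sub (conv_congr_ae (Pker t) hmk))
  simp only [hQ, hP]
  exact lintegral_eLpNorm_conv_Pker_vmul_sub_le_of_stronglyMeasurable hp hp' hq
    hf.1.stronglyMeasurable_mk (hf.ae_eq hmk)

theorem memLp_conv_Pker_vmul_sub (hp : 1 ≤ p) (hp' : p ≠ ∞) (hf : MemLp f p) (a : ℝ) {t : ℝ}
    (ht : 0 < t) : MemLp (fun h ↦ conv (Pker t) f (vmul a h) - conv (Pker t) f h) p := by
  have h := memLp_conv hp hp' measurable_Pker.of_uncurry_left (integrable_Pker ht) hf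
  exact (h.comp_measurePreserving (measurePreserving_vmul a)).sub h

end LittlewoodPaley

end HR

open HR in
theorem poisson_vertical_increment_bound_general (p q : ℝ) (hp : 1 ≤ p) (hq : 1 ≤ q)
    (X : Type*) [NormedAddCommGroup X] [NormedSpace ℝ X] [CompleteSpace X]
    (f : HR → X) (hf : MemLp f (ENNReal.ofReal p)) :
    (∫⁻ t in Ioi (0 : ℝ),
        ENNReal.ofReal
          ((∫ h : HR, ‖conv (Pker t) f (vmul t h) - conv (Pker t) f h‖ ^ p) ^ (q / p) /
            t ^ (1 + q / 2))) ^ (1 / q) ≤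
      ENNReal.ofReal (8 * √2 / π) *
        (∫⁻ t in Ioi (0 : ℝ),
          ENNReal.ofReal
            (t ^ (q / 2 - 1) *
              ((∫ h : HR, ‖conv (Qker t) f h‖ ^ p) ^ (1 / p)) ^ q)) ^ (1 / q) := by
  have hp0 : 0 < p := zero_lt_one.trans_le hp
  have hp1 : 1 ≤ ENNReal.ofReal p := ENNReal.one_le_ofReal.2 hp
  have hq0 : 0 ≤ q := zero_le_one.trans hq
  have hP (t : ℝ) (ht : t ∈ Ioi 0) : ENNReal.ofReal
      ((∫ h : HR, ‖conv (Pker t) f (vmul t h) - conv (Pker t) f h‖ ^ p) ^ (q / p) /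
        t ^ (1 + q / 2)) = ENNReal.ofReal (t ^ (-(1 + q / 2))) *
      eLpNorm (fun h ↦ conv (Pker t) f (vmul t h) - conv (Pker t) f h) (ENNReal.ofReal p) ^ q := by
    rw [← ofReal_mul_integral_norm_rpow_rpow hp0 hq0 (Real.rpow_nonneg (le_of_lt ht) _)
      (memLp_conv_Pker_vmul_sub hp1 ENNReal.ofReal_ne_top hf t ht), ← Real.rpow_mul (by positivity),
      one_div_mul_eq_div, Real.rpow_neg (le_of_lt ht), div_eq_inv_mul]
  have hQ (t : ℝ) (ht : t ∈ Ioi 0) := ofReal_mul_integral_norm_rpow_rpow hp0 hq0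
    (Real.rpow_nonneg (le_of_lt ht) (q / 2 - 1))
    (memLp_conv hp1 ENNReal.ofReal_ne_top measurable_Qker.of_uncurry_left (integrable_Qker ht) hf)
  rw [setLIntegral_congr_fun measurableSet_Ioi hP, setLIntegral_congr_fun measurableSet_Ioi hQ]
  exact lintegral_eLpNorm_conv_Pker_vmul_sub_le hp1 ENNReal.ofReal_ne_top hq hf

open HR in
/-- Inequality (2.28): the Besov-type seminorm of the vertical increment of `P_t*f`
is at most `(8√2/π)` times the generalized Littlewood–Paley `g`-function expression. -/
theorem poisson_vertical_increment_bound (p q : ℝ) (hp : 1 ≤ p) (hq : 1 ≤ q)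
    (X : Type) [NormedAddCommGroup X] [NormedSpace ℝ X] [CompleteSpace X]
    (f : HR → X) (hf : ContDiff ℝ (⊤ : ℕ∞) f) (hsupp : HasCompactSupport f) :
    (∫⁻ t in Set.Ioi (0 : ℝ),
        ENNReal.ofReal
          ((∫ h : HR, ‖conv (Pker t) f (vmul t h) - conv (Pker t) f h‖ ^ p) ^ (q / p) /
            t ^ (1 + q / 2))) ^ (1 / q) ≤
      ENNReal.ofReal (8 * Real.sqrt 2 / Real.pi) *
        (∫⁻ t in Set.Ioi (0 : ℝ),
          ENNReal.ofReal
            (t ^ (q / 2 - 1) *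
              ((∫ h : HR, ‖conv (Qker t) f h‖ ^ p) ^ (1 / p)) ^ q)) ^ (1 / q) :=
  poisson_vertical_increment_bound_general p q hp hq X f
    (hf.continuous.memLp_of_hasCompactSupport hsupp)
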